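/- Let λ > 0 and let r, ℓ : [0,T) × ℝ → ℝ be a C¹ solution of the diagonal system with initial data r(0,·) = r₀ = −ℓ(0,·), where r₀ is bounded and C¹, the limit r₀(+∞) := lim_{x→+∞} r₀(x) exists and is finite, and |r(t,x) − ℓ(t,y)| ≤ 2·sup|r₀| for all t, x, y; assume the characteristic flows and the correspondence map β(t,α) exist and are C¹. Suppose α ∈ ℝ satisfies: r₀'(α)·(r₀(α) + r₀(+∞)) < 0, r₀'(x)·r₀(α) < 0 for every x ≥ α, and in addition either r₀(α)·r₀(+∞) > 0 or r₀(+∞) = 0. Then the sign of η is preserved along the forward characteristic x₁(·,α): for every t ∈ [0,T), η(t, x₁(t,α))·η(0,α) > 0, where η(0,α) = 2r₀(α). -/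

import Mathlib

open Real Set Filter MeasureTheory

noncomputable section

/-- `L(u) = (1/2)(u·√(1+u²) + arcsinh u)`, the antiderivative of `Q(ξ) = √(1+ξ²)` with `L 0 = 0`. -/
def Lfun (u : ℝ) : ℝ := (1/2) * (u * Real.sqrt (1 + u^2) + Real.arsinh u)

/-- `û₁(η) = L⁻¹(−η/2)`. -/
def u1hat (η : ℝ) : ℝ := Function.invFun Lfun (-η/2)

/-- `k(η) = √(1 + û₁(η)²)`. -/
def kfun (η : ℝ) : ℝ := Real.sqrt (1 + (u1hat η)^2)

/-- `f(η) = k'(η)/√(k(η))`. -/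
def ffun (η : ℝ) : ℝ := deriv kfun η / Real.sqrt (kfun η)

/-- `A(t) = exp(λ t / 2)`. -/
def Afun (lam t : ℝ) : ℝ := Real.exp (lam * t / 2)

/-- `η(t,x) = r(t,x) − ℓ(t,x)`. -/
def etafun (r l : ℝ → ℝ → ℝ) (t x : ℝ) : ℝ := r t x - l t x

/-- Weighted Riemann derivative `p(t,x) = A(t)·√(k(η(t,x)))·∂ₓr(t,x)`. -/
def pfun (lam : ℝ) (r l : ℝ → ℝ → ℝ) (t x : ℝ) : ℝ :=
  Afun lam t * Real.sqrt (kfun (etafun r l t x)) * deriv (fun y => r t y) x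

/-- Weighted Riemann derivative `q(t,x) = A(t)·√(k(η(t,x)))·∂ₓℓ(t,x)`. -/
def qfun (lam : ℝ) (r l : ℝ → ℝ → ℝ) (t x : ℝ) : ℝ :=
  Afun lam t * Real.sqrt (kfun (etafun r l t x)) * deriv (fun y => l t y) x

/-!
Only the sign of the wave speed `k` matters, not its dependence on `η`. Multiplying by
`A(t) = exp(λt/2)` turns the damped system into `(A r)' = (λ/2)(−A ℓ)` along forward
characteristics and `(−A ℓ)' = (λ/2)(A r)` along backward ones, which is cooperative: positivity
of both unknowns on an initial interval propagates to the triangle bounded by the forward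
characteristic from its left end and a backward characteristic from its right end. At a first
point where one of them falls to a small level `ε > 0`, the other is still at least `ε`, so the
first was strictly smaller just before, a contradiction. Here "just before" may be taken along any
curve in the triangle that is merely tangent to the characteristic direction at that point, so no
characteristics through interior points are needed.

The system is linear once `k` is regarded as a function of `(t, x)`, so this applies to
`(r₀(α) r, r₀(α) ℓ)`. Initially `r₀(α) r` and `-r₀(α) ℓ` both equal `r₀(α) r₀`, which is positive on
`[α, ∞)` since it decreases there strictly to the limit `r₀(α) r₀(+∞) ≥ 0`.
-/

open Topology

lemma eventually_nhdsLT_lt_self {f : ℝ → ℝ} {f' s : ℝ} (hf : HasDerivWithinAt f f' (Iic s) s)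
    (hf' : 0 < f') : ∀ᶠ τ in 𝓝[<] s, f τ < f s := by
  have hslope : Tendsto (slope f s) (𝓝[<] s) (𝓝 f') :=
    (hasDerivWithinAt_iff_tendsto_slope' self_notMem_Iio).1 (hf.mono Iio_subset_Iic_self)
  filter_upwards [hslope.eventually_const_lt hf', self_mem_nhdsWithin] with τ hτ hlt
  rw [slope_comm, slope_def_field, div_pos_iff_of_pos_right (sub_pos.2 hlt)] at hτ
  exact sub_pos.1 hτ

lemma eventually_nhdsLT_lt {f g : ℝ → ℝ} {f' g' s : ℝ} (hf : HasDerivWithinAt f f' (Iic s) s)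
    (hg : HasDerivWithinAt g g' (Iic s) s) (hle : f s ≤ g s) (hlt : f s = g s → g' < f') :
    ∀ᶠ τ in 𝓝[<] s, f τ < g τ := by
  rcases hle.lt_or_eq with h | h
  · exact ((hf.continuousWithinAt.eventually_lt hg.continuousWithinAt h).filter_mono
      (nhdsWithin_mono s Iio_subset_Iic_self))
  · filter_upwards [eventually_nhdsLT_lt_self (hf.sub hg) (sub_pos.2 (hlt h))] with τ hτ
    simpa [h] using hτ

lemma exists_curve_between {X Y : ℝ → ℝ} {X' Y' κ s x : ℝ}
    (hX : HasDerivWithinAt X X' (Iic s) s) (hY : HasDerivWithinAt Y Y' (Iic s) s)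
    (hx : x ∈ Icc (X s) (Y s)) (hX' : X s = x → X' = κ) (hY' : x = Y s → Y' < κ) :
    ∃ γ : ℝ → ℝ, γ s = x ∧ HasDerivWithinAt γ κ (Iic s) s ∧
      ∀ᶠ τ in 𝓝[<] s, γ τ ∈ Icc (X τ) (Y τ) := by
  obtain ⟨γ, hγs, hγ, hXγ⟩ : ∃ γ : ℝ → ℝ, γ s = x ∧ HasDerivWithinAt γ κ (Iic s) s ∧
      ∀ᶠ τ in 𝓝[<] s, X τ ≤ γ τ := by
    rcases hx.1.eq_or_lt with h | h
    · exact ⟨X, h, hX' h ▸ hX, .of_forall fun _ => le_rfl⟩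
    · have hline : HasDerivWithinAt (fun τ => x + κ * (τ - s)) κ (Iic s) s := by
        simpa using (((hasDerivWithinAt_id s _).sub_const s).const_mul κ).const_add x
      have hlt : X s < x + κ * (s - s) := by simpa using h
      exact ⟨_, by simp, hline, (eventually_nhdsLT_lt hX hline hlt.le fun heq =>
        absurd heq hlt.ne).mono fun _ => le_of_lt⟩
  have hγY : ∀ᶠ τ in 𝓝[<] s, γ τ < Y τ :=
    eventually_nhdsLT_lt hγ hY (hγs.trans_le hx.2) fun h => hY' (hγs ▸ h)
  exact ⟨γ, hγs, hγ, (hXγ.and hγY).mono fun _ hτ => ⟨hτ.1, hτ.2.le⟩⟩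

lemma lt_of_eventually_lt_along {f g : ℝ × ℝ → ℝ} {γ : ℝ → ℝ} {s κ ε : ℝ} (hε : 0 < ε)
    (hγ : HasDerivWithinAt γ κ (Iic s) s) (hf : DifferentiableAt ℝ f (s, γ s))
    (hg : ContinuousAt g (s, γ s))
    (hpos : 0 < g (s, γ s) → 0 < fderiv ℝ f (s, γ s) (1, κ))
    (hlt : ∀ᶠ τ in 𝓝[<] s, ε < f (τ, γ τ) ∧ ε < g (τ, γ τ)) : ε < f (s, γ s) := by
  have hcurve : HasDerivWithinAt (fun τ => (τ, γ τ)) (1, κ) (Iic s) s :=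
    (hasDerivWithinAt_id s _).prodMk hγ
  have hgε : ε ≤ g (s, γ s) :=
    ge_of_tendsto ((hg.comp_continuousWithinAt (f := fun τ => (τ, γ τ))
      hcurve.continuousWithinAt).mono_left (nhdsWithin_mono s Iio_subset_Iic_self))
      (hlt.mono fun _ h => h.2.le)
  have hincr : ∀ᶠ τ in 𝓝[<] s, f (τ, γ τ) < f (s, γ s) :=
    eventually_nhdsLT_lt_self (hf.hasFDerivAt.comp_hasDerivWithinAt s hcurve)
      (hpos (hε.trans_le hgε))
  obtain ⟨τ, ⟨hτ, -⟩, hτs⟩ := (hlt.and hincr).exists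
  exact hτ.trans hτs

lemma exists_earliest_le {E : Type*} [TopologicalSpace E] [T2Space E] {D : Set E}
    {τ f : E → ℝ} {ε : ℝ} (hD : IsCompact D) (hτ : ContinuousOn τ D) (hf : ContinuousOn f D)
    (hne : ∃ p ∈ D, f p ≤ ε) :
    ∃ p ∈ D, f p ≤ ε ∧ ∀ q ∈ D, τ q < τ p → ε < f q := by
  have hK : IsCompact {p ∈ D | f p ≤ ε} :=
    hD.of_isClosed_subset (hD.isClosed.isClosed_le hf continuousOn_const) (sep_subset _ _)
  obtain ⟨p, hp, hmin⟩ := hK.exists_isMinOn hne (hτ.mono (sep_subset _ _))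
  refine ⟨p, hp.1, hp.2, fun q hq hlt => ?_⟩
  by_contra! hle
  exact (hmin ⟨hq, hle⟩).not_gt hlt

/-- The domain of dependence cut out of the strip `0 ≤ s ≤ t` by a left boundary `X` and a right
boundary `Y`, in coordinates `(time, space)`. It is a triangle when `X` and `Y` are characteristics
of the two families meeting at time `t`. -/
def characteristicTriangle (X Y : ℝ → ℝ) (t : ℝ) : Set (ℝ × ℝ) :=
  {p | p.1 ∈ Icc 0 t ∧ p.2 ∈ Icc (X p.1) (Y p.1)}

/-- A cooperative pair for the speeds `v` and `w`: at positive times in `D`, `R` increases in the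
direction `(1, v)` wherever `M` is positive, and `M` increases in the direction `(1, w)` wherever
`R` is positive. Differentiability is asked only at positive times, since solutions of an initial
value problem need not extend to negative times. -/
structure IsCooperativeOn (D : Set (ℝ × ℝ)) (v w : ℝ → ℝ → ℝ) (R M : ℝ × ℝ → ℝ) : Prop where
  continuousOn_R : ContinuousOn R D
  continuousOn_M : ContinuousOn M D
  differentiableAt_R : ∀ p ∈ D, 0 < p.1 → DifferentiableAt ℝ R p
  differentiableAt_M : ∀ p ∈ D, 0 < p.1 → DifferentiableAt ℝ M p
  fderiv_R_pos : ∀ p ∈ D, 0 < p.1 → 0 < M p → 0 < fderiv ℝ R p (1, v p.1 p.2)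
  fderiv_M_pos : ∀ p ∈ D, 0 < p.1 → 0 < R p → 0 < fderiv ℝ M p (1, w p.1 p.2)

section Triangle

variable {X Y : ℝ → ℝ} {v w : ℝ → ℝ → ℝ} {t : ℝ}

lemma isCompact_characteristicTriangle (hX : ContinuousOn X (Icc 0 t))
    (hY : ContinuousOn Y (Icc 0 t)) : IsCompact (characteristicTriangle X Y t) := by
  obtain ⟨m, hm⟩ := isCompact_Icc.bddBelow_image hX
  obtain ⟨M, hM⟩ := isCompact_Icc.bddAbove_image hY
  have hstrip : IsClosed (Icc 0 t ×ˢ (univ : Set ℝ)) := isClosed_Icc.prod isClosed_univ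
  have hX' : ContinuousOn (fun p : ℝ × ℝ => X p.1) (Icc 0 t ×ˢ univ) :=
    hX.comp continuousOn_fst fun _ hp => hp.1
  have hY' : ContinuousOn (fun p : ℝ × ℝ => Y p.1) (Icc 0 t ×ˢ univ) :=
    hY.comp continuousOn_fst fun _ hp => hp.1
  have hclosed : IsClosed (characteristicTriangle X Y t) := by
    convert (hstrip.isClosed_le hX' continuousOn_snd).inter
      (hstrip.isClosed_le continuousOn_snd hY') using 1
    ext p
    simp only [characteristicTriangle, mem_Icc, mem_ofPred_eq, mem_inter_iff, mem_prod, mem_univ]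
    tauto
  have hbox : IsCompact (Icc 0 t ×ˢ Icc m M) := isCompact_Icc.prod isCompact_Icc
  exact hbox.of_isClosed_subset hclosed fun p hp =>
    ⟨hp.1, (hm (mem_image_of_mem X hp.1)).trans hp.2.1, hp.2.2.trans (hM (mem_image_of_mem Y hp.1))⟩

lemma eventually_mem_characteristicTriangle {γ : ℝ → ℝ} {s : ℝ} (hs : s ∈ Ioc 0 t)
    (hγ : ∀ᶠ τ in 𝓝[<] s, γ τ ∈ Icc (X τ) (Y τ)) :
    ∀ᶠ τ in 𝓝[<] s, τ < s ∧ (τ, γ τ) ∈ characteristicTriangle X Y t := by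
  filter_upwards [hγ, Ico_mem_nhdsLT hs.1] with τ hτ hτs
  exact ⟨hτs.2, ⟨hτs.1, hτs.2.le.trans hs.2⟩, hτ⟩

lemma hasDerivWithinAt_Iic_of_isIntegralCurveOn {γ : ℝ → ℝ}
    (hγ : IsIntegralCurveOn γ v (Icc 0 t)) {s : ℝ} (hs : s ∈ Ioc 0 t) :
    HasDerivWithinAt γ (v s (γ s)) (Iic s) s := by
  have h : HasDerivWithinAt γ (v s (γ s)) (Icc 0 s) s :=
    (hγ s ⟨hs.1.le, hs.2⟩).mono (Icc_subset_Icc_right hs.2)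
  exact h.mono_of_mem_nhdsWithin (Icc_mem_nhdsLE hs.1)

lemma exists_curve_with_left_boundary_speed
    (hX : IsIntegralCurveOn X v (Icc 0 t)) (hY : IsIntegralCurveOn Y w (Icc 0 t))
    {s x : ℝ} (hwv : w s x < v s x) (hs : 0 < s)
    (hp : (s, x) ∈ characteristicTriangle X Y t) :
    ∃ γ : ℝ → ℝ, γ s = x ∧ HasDerivWithinAt γ (v s x) (Iic s) s ∧
      ∀ᶠ τ in 𝓝[<] s, τ < s ∧ (τ, γ τ) ∈ characteristicTriangle X Y t := by
  have hs' : s ∈ Ioc 0 t := ⟨hs, hp.1.2⟩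
  obtain ⟨γ, hγs, hγ, hmem⟩ := exists_curve_between (x := x) (κ := v s x)
    (hasDerivWithinAt_Iic_of_isIntegralCurveOn hX hs')
    (hasDerivWithinAt_Iic_of_isIntegralCurveOn hY hs') hp.2
    (fun h => by rw [h]) (fun h => h ▸ hwv)
  exact ⟨γ, hγs, hγ, eventually_mem_characteristicTriangle hs' hmem⟩

lemma exists_curve_with_right_boundary_speed
    (hX : IsIntegralCurveOn X v (Icc 0 t)) (hY : IsIntegralCurveOn Y w (Icc 0 t))
    {s x : ℝ} (hwv : w s x < v s x) (hs : 0 < s)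
    (hp : (s, x) ∈ characteristicTriangle X Y t) :
    ∃ γ : ℝ → ℝ, γ s = x ∧ HasDerivWithinAt γ (w s x) (Iic s) s ∧
      ∀ᶠ τ in 𝓝[<] s, τ < s ∧ (τ, γ τ) ∈ characteristicTriangle X Y t := by
  have hs' : s ∈ Ioc 0 t := ⟨hs, hp.1.2⟩
  -- The reflection `x ↦ -x` exchanges the two boundaries.
  obtain ⟨γ, hγs, hγ, hmem⟩ := exists_curve_between (x := -x) (κ := -w s x)
    (hasDerivWithinAt_Iic_of_isIntegralCurveOn hY hs').neg
    (hasDerivWithinAt_Iic_of_isIntegralCurveOn hX hs').neg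
    ⟨neg_le_neg hp.2.2, neg_le_neg hp.2.1⟩
    (fun h => by rw [neg_inj.1 h]) (fun h => neg_lt_neg (neg_inj.1 h ▸ hwv))
  refine ⟨-γ, by simp [hγs], by simpa using hγ.neg, eventually_mem_characteristicTriangle hs' ?_⟩
  exact hmem.mono fun τ hτ => ⟨le_neg_of_le_neg hτ.2, neg_le_of_neg_le hτ.1⟩

variable {R M : ℝ × ℝ → ℝ}

theorem IsCooperativeOn.lt_min_of_initial_lt_min
    (h : IsCooperativeOn (characteristicTriangle X Y t) v w R M)
    (hX : IsIntegralCurveOn X v (Icc 0 t)) (hY : IsIntegralCurveOn Y w (Icc 0 t))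
    (hwv : ∀ p ∈ characteristicTriangle X Y t, w p.1 p.2 < v p.1 p.2)
    {ε : ℝ} (hε : 0 < ε)
    (hinit : ∀ x ∈ Icc (X 0) (Y 0), ε < min (R (0, x)) (M (0, x))) :
    ∀ p ∈ characteristicTriangle X Y t, ε < min (R p) (M p) := by
  by_contra! hne
  obtain ⟨⟨s, x⟩, hp, hle, hbefore⟩ := exists_earliest_le
    (isCompact_characteristicTriangle hX.continuousOn hY.continuousOn) continuousOn_fst
    (h.continuousOn_R.inf h.continuousOn_M) hne
  have hs : 0 < s := by
    refine hp.1.1.lt_of_ne fun hs => ?_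
    subst hs
    exact hle.not_gt (hinit x hp.2)
  have hspeed : w s x < v s x := hwv _ hp
  have hRd := h.differentiableAt_R _ hp hs
  have hMd := h.differentiableAt_M _ hp hs
  have hR : ε < R (s, x) := by
    obtain ⟨γ, rfl, hγ, hmem⟩ := exists_curve_with_left_boundary_speed hX hY hspeed hs hp
    exact lt_of_eventually_lt_along hε hγ hRd hMd.continuousAt (h.fderiv_R_pos _ hp hs)
      (hmem.mono fun τ hτ => lt_min_iff.1 (hbefore _ hτ.2 hτ.1))
  have hM : ε < M (s, x) := by
    obtain ⟨γ, rfl, hγ, hmem⟩ := exists_curve_with_right_boundary_speed hX hY hspeed hs hp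
    exact lt_of_eventually_lt_along hε hγ hMd hRd.continuousAt (h.fderiv_M_pos _ hp hs)
      (hmem.mono fun τ hτ => (lt_min_iff.1 (hbefore _ hτ.2 hτ.1)).symm)
  exact hle.not_gt (lt_min hR hM)

theorem IsCooperativeOn.pos_of_initial_pos
    (h : IsCooperativeOn (characteristicTriangle X Y t) v w R M)
    (hX : IsIntegralCurveOn X v (Icc 0 t)) (hY : IsIntegralCurveOn Y w (Icc 0 t))
    (hwv : ∀ p ∈ characteristicTriangle X Y t, w p.1 p.2 < v p.1 p.2)
    (hinit : ∀ x ∈ Icc (X 0) (Y 0), 0 < R (0, x) ∧ 0 < M (0, x)) :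
    ∀ p ∈ characteristicTriangle X Y t, 0 < R p ∧ 0 < M p := by
  intro p hp
  have hbase : MapsTo (fun x => ((0 : ℝ), x)) (Icc (X 0) (Y 0)) (characteristicTriangle X Y t) :=
    fun x hx => ⟨⟨le_rfl, hp.1.1.trans hp.1.2⟩, hx⟩
  have hmin : ContinuousOn (fun x => min (R (0, x)) (M (0, x))) (Icc (X 0) (Y 0)) :=
    (h.continuousOn_R.inf h.continuousOn_M).comp (by fun_prop) hbase
  obtain ⟨m, hm, hle⟩ := isCompact_Icc.exists_forall_le' hmin
    fun x hx => lt_min (hinit x hx).1 (hinit x hx).2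
  have hlt : m / 2 < min (R p) (M p) := h.lt_min_of_initial_lt_min hX hY hwv (half_pos hm)
    (fun x hx => (half_lt_self hm).trans_le (hle x hx)) p hp
  exact lt_min_iff.1 ((half_pos hm).trans hlt)

end Triangle

lemma fderiv_uncurry_apply_one {u : ℝ → ℝ → ℝ} {p : ℝ × ℝ}
    (hu : DifferentiableAt ℝ (Function.uncurry u) p) (κ : ℝ) :
    fderiv ℝ (Function.uncurry u) p (1, κ) =
      deriv (fun s => u s p.2) p.1 + κ * deriv (fun y => u p.1 y) p.2 := by
  have ht : HasDerivAt (fun s => u s p.2) (fderiv ℝ (Function.uncurry u) p (1, 0)) p.1 :=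
    hu.hasFDerivAt.comp_hasDerivAt (f := fun s => (s, p.2)) p.1
      ((hasDerivAt_id p.1).prodMk (hasDerivAt_const p.1 p.2))
  have hx : HasDerivAt (fun y => u p.1 y) (fderiv ℝ (Function.uncurry u) p (0, 1)) p.2 :=
    hu.hasFDerivAt.comp_hasDerivAt (f := fun y => (p.1, y)) p.2
      ((hasDerivAt_const p.2 p.1).prodMk (hasDerivAt_id p.2))
  have hdir : ((1 : ℝ), κ) = (1, 0) + κ • ((0 : ℝ), (1 : ℝ)) := by simp
  rw [ht.deriv, hx.deriv, hdir, map_add, map_smul, smul_eq_mul]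

/-- The damping-compensated unknown `A(t) u(t, x)`, as a function of the point `(t, x)`. -/
def weighted (lam : ℝ) (u : ℝ → ℝ → ℝ) (p : ℝ × ℝ) : ℝ :=
  Afun lam p.1 * Function.uncurry u p

lemma Afun_pos (lam t : ℝ) : 0 < Afun lam t := Real.exp_pos _

lemma weighted_pos_iff {lam : ℝ} {u : ℝ → ℝ → ℝ} {p : ℝ × ℝ} :
    0 < weighted lam u p ↔ 0 < u p.1 p.2 :=
  mul_pos_iff_of_pos_left (Afun_pos lam p.1)

lemma weighted_neg_iff {lam : ℝ} {u : ℝ → ℝ → ℝ} {p : ℝ × ℝ} :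
    weighted lam u p < 0 ↔ u p.1 p.2 < 0 :=
  smul_neg_iff_of_pos_left (Afun_pos lam p.1)

lemma hasDerivAt_Afun (lam t : ℝ) : HasDerivAt (Afun lam) (Afun lam t * (lam / 2)) t := by
  have h : HasDerivAt (fun s : ℝ => lam * s / 2) (lam / 2) t := by
    simpa using ((hasDerivAt_id t).const_mul lam).div_const 2
  exact h.exp

lemma differentiable_Afun_fst (lam : ℝ) : Differentiable ℝ fun p : ℝ × ℝ => Afun lam p.1 :=
  fun p => (hasDerivAt_Afun lam p.1).differentiableAt.comp p differentiableAt_fst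

lemma fderiv_weighted_apply_one {lam : ℝ} {u : ℝ → ℝ → ℝ} {p : ℝ × ℝ}
    (hu : DifferentiableAt ℝ (Function.uncurry u) p) (κ : ℝ) :
    fderiv ℝ (weighted lam u) p (1, κ) = Afun lam p.1 * (lam / 2 * u p.1 p.2 +
      (deriv (fun s => u s p.2) p.1 + κ * deriv (fun y => u p.1 y) p.2)) := by
  have hA : HasFDerivAt (fun q : ℝ × ℝ => Afun lam q.1)
      ((Afun lam p.1 * (lam / 2)) • ContinuousLinearMap.fst ℝ ℝ ℝ) p :=
    (hasDerivAt_Afun lam p.1).comp_hasFDerivAt p hasFDerivAt_fst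
  have hmul : HasFDerivAt (weighted lam u) _ p := hA.mul hu.hasFDerivAt
  rw [hmul.fderiv, ← fderiv_uncurry_apply_one hu]
  simp only [add_apply, smul_apply, ContinuousLinearMap.coe_fst', smul_eq_mul, Function.uncurry]
  ring

/-- `(r, ℓ)` solves on `[0, T) × ℝ` the damped diagonal system with wave speed `k`, here an
arbitrary function of `(t, x)`, which makes the system linear. The equations are imposed only for
`t > 0`: at `t = 0` the two-sided time derivative is not determined by the solution. -/
structure IsDampedDiagonalSolution (lam T : ℝ) (k r l : ℝ → ℝ → ℝ) : Prop where
  differentiableOn_r : DifferentiableOn ℝ (Function.uncurry r) (Ico 0 T ×ˢ univ)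
  differentiableOn_l : DifferentiableOn ℝ (Function.uncurry l) (Ico 0 T ×ˢ univ)
  eq_r : ∀ t ∈ Ioo 0 T, ∀ x, deriv (fun s => r s x) t + k t x * deriv (fun y => r t y) x
    = -(lam / 2) * (r t x + l t x)
  eq_l : ∀ t ∈ Ioo 0 T, ∀ x, deriv (fun s => l s x) t - k t x * deriv (fun y => l t y) x
    = -(lam / 2) * (r t x + l t x)

namespace IsDampedDiagonalSolution

variable {lam T : ℝ} {k r l : ℝ → ℝ → ℝ}

protected lemma const_mul (h : IsDampedDiagonalSolution lam T k r l) (c : ℝ) :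
    IsDampedDiagonalSolution lam T k (fun t x => c * r t x) (fun t x => c * l t x) where
  differentiableOn_r := h.differentiableOn_r.const_mul c
  differentiableOn_l := h.differentiableOn_l.const_mul c
  eq_r t ht x := by
    simp only [deriv_const_mul_field]
    linear_combination c * h.eq_r t ht x
  eq_l t ht x := by
    simp only [deriv_const_mul_field]
    linear_combination c * h.eq_l t ht x

lemma isCooperativeOn (h : IsDampedDiagonalSolution lam T k r l) (hlam : 0 < lam)
    {D : Set (ℝ × ℝ)} (hD : D ⊆ Ico 0 T ×ˢ univ) :
    IsCooperativeOn D k (-k) (weighted lam r) (-weighted lam l) := by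
  have hnhds : ∀ p ∈ D, 0 < p.1 → Ico 0 T ×ˢ univ ∈ 𝓝 p := fun p hp hp0 =>
    prod_mem_nhds (Ico_mem_nhds hp0 (hD hp).1.2) univ_mem
  have hr : ∀ p ∈ D, 0 < p.1 → DifferentiableAt ℝ (Function.uncurry r) p := fun p hp hp0 =>
    h.differentiableOn_r.differentiableAt (hnhds p hp hp0)
  have hl : ∀ p ∈ D, 0 < p.1 → DifferentiableAt ℝ (Function.uncurry l) p := fun p hp hp0 =>
    h.differentiableOn_l.differentiableAt (hnhds p hp hp0)
  have hA := differentiable_Afun_fst lam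
  refine ⟨hA.continuous.continuousOn.mul (h.differentiableOn_r.continuousOn.mono hD),
    (hA.continuous.continuousOn.mul (h.differentiableOn_l.continuousOn.mono hD)).neg,
    fun p hp hp0 => (hA p).mul (hr p hp hp0), fun p hp hp0 => ((hA p).mul (hl p hp hp0)).neg,
    fun p hp hp0 hM => ?_, fun p hp hp0 hR => ?_⟩
  · calc
      0 < lam / 2 * (-weighted lam l) p := by positivity
      _ = fderiv ℝ (weighted lam r) p (1, k p.1 p.2) := by
        rw [fderiv_weighted_apply_one (hr p hp hp0), h.eq_r p.1 ⟨hp0, (hD hp).1.2⟩]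
        simp only [Pi.neg_apply, weighted, Function.uncurry]
        ring
  · calc
      0 < lam / 2 * weighted lam r p := by positivity
      _ = fderiv ℝ (-weighted lam l) p (1, (-k) p.1 p.2) := by
        have heq := h.eq_l p.1 ⟨hp0, (hD hp).1.2⟩ p.2
        rw [fderiv_neg, neg_apply, fderiv_weighted_apply_one (hl p hp hp0)]
        simp only [Pi.neg_apply, weighted, Function.uncurry]
        linear_combination Afun lam p.1 * heq

theorem pos_and_neg_of_initial (h : IsDampedDiagonalSolution lam T k r l) (hlam : 0 < lam)
    (hk : ∀ t x, 0 < k t x) {X Y : ℝ → ℝ} {t : ℝ} (ht : t < T)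
    (hX : IsIntegralCurveOn X k (Icc 0 t)) (hY : IsIntegralCurveOn Y (-k) (Icc 0 t))
    (hinit : ∀ x ∈ Icc (X 0) (Y 0), 0 < r 0 x ∧ l 0 x < 0) :
    ∀ p ∈ characteristicTriangle X Y t, 0 < r p.1 p.2 ∧ l p.1 p.2 < 0 := by
  have hcoop := h.isCooperativeOn hlam (D := characteristicTriangle X Y t)
    fun p hp => ⟨⟨hp.1.1, hp.1.2.trans_lt ht⟩, mem_univ _⟩
  have hpos := hcoop.pos_of_initial_pos hX hY (fun p _ => neg_lt_self (hk p.1 p.2)) fun x hx =>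
    ⟨weighted_pos_iff.2 (hinit x hx).1, neg_pos.2 (weighted_neg_iff.2 (hinit x hx).2)⟩
  exact fun p hp =>
    ⟨weighted_pos_iff.1 (hpos p hp).1, weighted_neg_iff.1 (neg_pos.1 (hpos p hp).2)⟩

end IsDampedDiagonalSolution

lemma lt_of_strictAntiOn_of_tendsto {f : ℝ → ℝ} {a L x : ℝ} (hf : StrictAntiOn f (Ici a))
    (hL : Tendsto f atTop (𝓝 L)) (hx : a ≤ x) : L < f x := by
  have hx' : a ≤ x + 1 := by linarith
  have hle : L ≤ f (x + 1) := le_of_tendsto hL <| by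
    filter_upwards [eventually_ge_atTop (x + 1)] with y hy
    exact hf.antitoneOn hx' (hx'.trans hy) hy
  exact hle.trans_lt (hf hx hx' (lt_add_one x))

lemma mul_pos_of_deriv_mul_neg {f : ℝ → ℝ} {a L x : ℝ} (hf : Differentiable ℝ f)
    (hL : Tendsto f atTop (𝓝 L)) (hf' : ∀ y, a < y → deriv f y * f a < 0)
    (haL : 0 ≤ f a * L) (hx : a ≤ x) : 0 < f a * f x := by
  have hanti : StrictAntiOn (fun y => f a * f y) (Ici a) := by
    refine strictAntiOn_of_deriv_neg (convex_Ici a) (hf.continuous.const_mul _).continuousOn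
      fun y hy => ?_
    rw [deriv_const_mul_field, mul_comm]
    exact hf' y (by simpa using hy)
  exact haL.trans_lt <|
    lt_of_strictAntiOn_of_tendsto (f := fun y => f a * f y) hanti (hL.const_mul _) hx

lemma kfun_pos (η : ℝ) : 0 < kfun η := Real.sqrt_pos.2 (by positivity)

theorem eta_sign_preserved_along_forward_characteristic_general {lam T α : ℝ} (hlam : 0 < lam)
    {k r l : ℝ → ℝ → ℝ} {r₀ x₁ : ℝ → ℝ} (hk : ∀ t x, 0 < k t x)
    (hsol : IsDampedDiagonalSolution lam T k r l)
    (hr0 : ∀ x, α ≤ x → r 0 x = r₀ x) (hl0 : ∀ x, α ≤ x → l 0 x = -r₀ x)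
    (hx₁0 : x₁ 0 = α) (hx₁ : IsIntegralCurveOn x₁ k (Ico 0 T))
    (hback : ∀ t ∈ Ico 0 T, ∃ y : ℝ → ℝ, x₁ t = y t ∧ IsIntegralCurveOn y (-k) (Icc 0 t))
    (hr₀ : ∀ x, α ≤ x → 0 < r₀ α * r₀ x) :
    ∀ t ∈ Ico 0 T, etafun r l t (x₁ t) * (2 * r₀ α) > 0 := by
  intro t ht
  obtain ⟨y, hy, hyint⟩ := hback t ht
  have hinit : ∀ x ∈ Icc (x₁ 0) (y 0), 0 < r₀ α * r 0 x ∧ r₀ α * l 0 x < 0 := fun x hx => by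
    have hαx : α ≤ x := hx₁0 ▸ hx.1
    rw [hr0 x hαx, hl0 x hαx, mul_neg, neg_lt_zero]
    exact ⟨hr₀ x hαx, hr₀ x hαx⟩
  obtain ⟨hr, hl⟩ := (hsol.const_mul (r₀ α)).pos_and_neg_of_initial hlam hk ht.2
    (hx₁.mono (Icc_subset_Ico_right ht.2)) hyint hinit (t, x₁ t)
    ⟨⟨ht.1, le_rfl⟩, le_rfl, hy.le⟩
  calc
    0 < 2 * (r₀ α * r t (x₁ t) - r₀ α * l t (x₁ t)) := by linarith
    _ = etafun r l t (x₁ t) * (2 * r₀ α) := by rw [etafun]; ring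

/-- under the additional sign condition on `r₀(+∞)`, the sign of `η`
is preserved along the forward characteristic: `η(t,x₁(t,α))·η(0,α) > 0`,
where `η(0,α) = 2r₀(α)`. -/
theorem eta_sign_preserved_along_forward_characteristic
    (lam T : ℝ) (hlam : 0 < lam)
    (r l : ℝ → ℝ → ℝ) (r₀ : ℝ → ℝ) (rinf : ℝ)
    (hreg_r : ContDiffOn ℝ 1 (Function.uncurry r) (Set.Ico 0 T ×ˢ (Set.univ : Set ℝ)))
    (hreg_l : ContDiffOn ℝ 1 (Function.uncurry l) (Set.Ico 0 T ×ˢ (Set.univ : Set ℝ)))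
    (hsys_r : ∀ t ∈ Set.Ico (0:ℝ) T, ∀ x : ℝ,
      deriv (fun s => r s x) t + kfun (etafun r l t x) * deriv (fun y => r t y) x
        = -(lam/2) * (r t x + l t x))
    (hsys_l : ∀ t ∈ Set.Ico (0:ℝ) T, ∀ x : ℝ,
      deriv (fun s => l s x) t - kfun (etafun r l t x) * deriv (fun y => l t y) x
        = -(lam/2) * (r t x + l t x))
    (hr0 : ∀ x : ℝ, r 0 x = r₀ x)
    (hl0 : ∀ x : ℝ, l 0 x = -r₀ x)
    (hr₀reg : ContDiff ℝ 1 r₀)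
    (hr₀bdd : ∃ C : ℝ, ∀ x : ℝ, |r₀ x| ≤ C)
    (hrinf : Filter.Tendsto r₀ Filter.atTop (nhds rinf))
    (hetabdd : ∀ t ∈ Set.Ico (0:ℝ) T, ∀ x y : ℝ,
      |r t x - l t y| ≤ 2 * ⨆ z : ℝ, |r₀ z|)
    -- the forward characteristic starting from α and the backward characteristic flow
    (α : ℝ) (x₁ : ℝ → ℝ) (x₂ : ℝ → ℝ → ℝ)
    (hx₁0 : x₁ 0 = α)
    (hx₁ : ∀ t ∈ Set.Ico (0:ℝ) T,
      HasDerivAt x₁ (kfun (etafun r l t (x₁ t))) t)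
    (hflowreg₂ : ContDiffOn ℝ 1 (Function.uncurry x₂) (Set.Ico 0 T ×ˢ (Set.univ : Set ℝ)))
    (hx₂0 : ∀ b : ℝ, x₂ 0 b = b)
    (hx₂ : ∀ b : ℝ, ∀ t ∈ Set.Ico (0:ℝ) T,
      HasDerivAt (fun s => x₂ s b) (-(kfun (etafun r l t (x₂ t b)))) t)
    -- the correspondence map t ↦ β(t,α)
    (bmap : ℝ → ℝ)
    (hbmapreg : ContDiffOn ℝ 1 bmap (Set.Ico 0 T))
    (hbmap : ∀ t ∈ Set.Ico (0:ℝ) T, x₁ t = x₂ t (bmap t))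
    -- conditions (69) on the initial profile at α
    (hcond₁ : deriv r₀ α * (r₀ α + rinf) < 0)
    (hcond₂ : ∀ x : ℝ, α ≤ x → deriv r₀ x * r₀ α < 0)
    -- the additional sign condition
    (hcond₃ : 0 < r₀ α * rinf ∨ rinf = 0) :
    ∀ t ∈ Set.Ico (0:ℝ) T,
      etafun r l t (x₁ t) * (2 * r₀ α) > 0 := by
  have hsol : IsDampedDiagonalSolution lam T (fun t x => kfun (etafun r l t x)) r l :=
    ⟨hreg_r.differentiableOn one_ne_zero, hreg_l.differentiableOn one_ne_zero,
      fun t ht => hsys_r t (Ioo_subset_Ico_self ht), fun t ht => hsys_l t (Ioo_subset_Ico_self ht)⟩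
  have hnonneg : 0 ≤ r₀ α * rinf := hcond₃.elim le_of_lt fun h => by simp [h]
  exact eta_sign_preserved_along_forward_characteristic_general hlam (fun _ _ => kfun_pos _) hsol
    (fun x _ => hr0 x) (fun x _ => hl0 x) hx₁0 (fun t ht => (hx₁ t ht).hasDerivWithinAt)
    (fun t ht => ⟨fun s => x₂ s (bmap t), hbmap t ht, fun s hs =>
      (hx₂ _ s ⟨hs.1, hs.2.trans_lt ht.2⟩).hasDerivWithinAt⟩)
    fun _ => mul_pos_of_deriv_mul_neg (hr₀reg.differentiable one_ne_zero) hrinf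
      (fun y hy => hcond₂ y hy.le) hnonneg
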